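/- Let ξ and η be random vectors taking values in (0,∞)^n. If E[∏ᵢ ξᵢ^{αᵢ}] = E[∏ᵢ ηᵢ^{αᵢ}] < ∞ for all α = (α₁,...,αₙ) in some nonempty open subset of ℝ^n, then ξ and η are identically distributed. -/

import Mathlib

open MeasureTheory Finset

/-!
Passing to logarithms turns the moments `E[∏ᵢ ξᵢ^{αᵢ}]` into the Laplace transform of the law of
`(log ξᵢ)ᵢ`. A Laplace transform that is finite on an open set `U` of the dual determines the
measure: tilting by `exp L₀` with `L₀ ∈ U` translates `U` to a neighbourhood of `0`, so that every
one-dimensional marginal has a moment generating function near `0`. This function extends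
analytically to a vertical strip containing the imaginary axis, where it is the characteristic
function, and characteristic functions determine finite measures.
-/

open ProbabilityTheory Filter Topology Real

section IdentityTheorem

variable {Ω Ω' : Type*} [MeasurableSpace Ω] [MeasurableSpace Ω'] {μ : Measure Ω} {ν : Measure Ω'}

lemma eqOn_complexMGF_of_frequently_mgf_eq {X : Ω → ℝ} {Y : Ω' → ℝ} {t : ℝ}
    (hX : t ∈ interior (integrableExpSet X μ)) (hY : t ∈ interior (integrableExpSet Y ν))
    (h : ∃ᶠ s in 𝓝[≠] t, mgf X μ s = mgf Y ν s) :
    Set.EqOn (complexMGF X μ) (complexMGF Y ν)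
      {z | z.re ∈ interior (integrableExpSet X μ) ∩ interior (integrableExpSet Y ν)} := by
  have hconvex : Convex ℝ (interior (integrableExpSet X μ) ∩ interior (integrableExpSet Y ν)) :=
    convex_integrableExpSet.interior.inter convex_integrableExpSet.interior
  have hofReal : Tendsto ((↑) : ℝ → ℂ) (𝓝[≠] t) (𝓝[≠] (t : ℂ)) :=
    Complex.continuous_ofReal.continuousWithinAt.tendsto_nhdsWithin
      fun _ hs ↦ Complex.ofReal_injective.ne hs
  refine AnalyticOnNhd.eqOn_of_preconnected_of_frequently_eq (𝕜 := ℂ)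
    (analyticOnNhd_complexMGF.mono fun _ hz ↦ hz.1) (analyticOnNhd_complexMGF.mono fun _ hz ↦ hz.2)
    (hconvex.linear_preimage Complex.reLm).isPreconnected (z₀ := t) ⟨hX, hY⟩
    (hofReal.frequently (h.mono fun s hs ↦ ?_))
  rw [complexMGF_ofReal, complexMGF_ofReal, hs]

end IdentityTheorem

section Tilted

variable {α : Type*} [MeasurableSpace α] {μ ν : Measure α} {f : α → ℝ}

lemma withDensity_tilted_exp_neg (hf : Integrable (fun x ↦ exp (f x)) μ) :
    (μ.tilted f).withDensity (fun x ↦ ENNReal.ofReal (exp (-f x) * ∫ y, exp (f y) ∂μ)) = μ := by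
  rcases eq_zero_or_neZero μ with rfl | _
  · simp
  have hpos (x : α) : 0 < exp (f x) / ∫ y, exp (f y) ∂μ :=
    div_pos (exp_pos _) (integral_exp_pos hf)
  have hinv (x : α) : ENNReal.ofReal (exp (-f x) * ∫ y, exp (f y) ∂μ) =
      (ENNReal.ofReal (exp (f x) / ∫ y, exp (f y) ∂μ))⁻¹ := by
    rw [← ENNReal.ofReal_inv_of_pos (hpos x), inv_div, exp_neg, div_eq_inv_mul]
  simp only [hinv]
  exact withDensity_inv_same₀ (hf.aemeasurable.div_const _).ennreal_ofReal
    (.of_forall fun x ↦ (ENNReal.ofReal_pos.2 (hpos x)).ne') (.of_forall fun _ ↦ by simp)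

lemma eq_of_tilted_eq (hμ : Integrable (fun x ↦ exp (f x)) μ)
    (hν : Integrable (fun x ↦ exp (f x)) ν) (hint : ∫ x, exp (f x) ∂μ = ∫ x, exp (f x) ∂ν)
    (h : μ.tilted f = ν.tilted f) : μ = ν := by
  rw [← withDensity_tilted_exp_neg hμ, h, hint, withDensity_tilted_exp_neg hν]

end Tilted

section Laplace

variable {E : Type*} [NormedAddCommGroup E] [NormedSpace ℝ E] [CompleteSpace E]
  [SecondCountableTopology E] [MeasurableSpace E] [BorelSpace E] {μ ν : Measure E}

lemma measure_ext_of_mgf_dual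
    (hμ : ∀ L : StrongDual ℝ E, 0 ∈ interior (integrableExpSet L μ))
    (hν : ∀ L : StrongDual ℝ E, 0 ∈ interior (integrableExpSet L ν))
    (h : ∀ L : StrongDual ℝ E, ∃ᶠ s in 𝓝[≠] 0, mgf L μ s = mgf L ν s) : μ = ν := by
  have isFiniteMeasure {ρ : Measure E} (hρ : 0 ∈ interior (integrableExpSet (0 : E → ℝ) ρ)) :
      IsFiniteMeasure ρ := by
    simpa [integrableExpSet, integrable_const_iff] using interior_subset hρ
  have := isFiniteMeasure (hμ 0)
  have := isFiniteMeasure (hν 0)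
  refine Measure.ext_of_charFunDual (funext fun L ↦ ?_)
  have hI : complexMGF L μ Complex.I = complexMGF L ν Complex.I :=
    eqOn_complexMGF_of_frequently_mgf_eq (hμ L) (hν L) (h L) (by simpa using ⟨hμ L, hν L⟩)
  simpa only [charFunDual_apply, complexMGF, mul_comm] using hI

lemma measure_ext_of_integral_exp_dual {U : Set (StrongDual ℝ E)} (hU : IsOpen U)
    (hUne : U.Nonempty)
    (hμ : ∀ L ∈ U, Integrable (fun x ↦ exp (L x)) μ)
    (hν : ∀ L ∈ U, Integrable (fun x ↦ exp (L x)) ν)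
    (h : ∀ L ∈ U, ∫ x, exp (L x) ∂μ = ∫ x, exp (L x) ∂ν) : μ = ν := by
  obtain ⟨L₀, hL₀⟩ := hUne
  have hline (L : StrongDual ℝ E) : ∀ᶠ s in 𝓝 (0 : ℝ), L₀ + s • L ∈ U :=
    (by fun_prop : Continuous fun s : ℝ ↦ L₀ + s • L).continuousAt.eventually_mem
      (hU.mem_nhds (by simpa using hL₀))
  have hinterior {ρ : Measure E} (hρ : ∀ L ∈ U, Integrable (fun x ↦ exp (L x)) ρ)
      (L : StrongDual ℝ E) : 0 ∈ interior (integrableExpSet L (ρ.tilted L₀)) := by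
    refine mem_interior_iff_mem_nhds.2 ((hline L).mono fun s hs ↦ ?_)
    refine (integrable_tilted_iff (hρ L₀ hL₀) _).2 ?_
    simpa [exp_add] using hρ _ hs
  refine eq_of_tilted_eq (hμ L₀ hL₀) (hν L₀ hL₀) (h L₀ hL₀)
    (measure_ext_of_mgf_dual (hinterior hμ) (hinterior hν) fun L ↦ ?_)
  refine (((hline L).filter_mono nhdsWithin_le_nhds).mono fun s hs ↦ ?_).frequently
  calc mgf L (μ.tilted L₀) s
      = (∫ x, exp ((L₀ + s • L) x) ∂μ) / ∫ x, exp (L₀ x) ∂μ := integral_exp_tilted _ _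
    _ = (∫ x, exp ((L₀ + s • L) x) ∂ν) / ∫ x, exp (L₀ x) ∂ν := by rw [h _ hs, h L₀ hL₀]
    _ = mgf L (ν.tilted L₀) s := (integral_exp_tilted _ _).symm

end Laplace

section RandomVectors

variable {ι Ω Ω' : Type*} [MeasurableSpace Ω] [MeasurableSpace Ω'] {μ : Measure Ω}
  {ν : Measure Ω'}

lemma identDistrib_exp_log {X : Ω → ι → ℝ} (hX : AEMeasurable X μ)
    (hpos : ∀ᵐ ω ∂μ, ∀ i, 0 < X ω i) :
    IdentDistrib (fun ω i ↦ exp (log (X ω i))) X μ μ :=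
  .symm <| .of_ae_eq hX <| hpos.mono fun _ hω ↦ funext fun i ↦ (exp_log (hω i)).symm

variable [Fintype ι] {U : Set (ι → ℝ)}

lemma identDistrib_of_integral_exp_sum_mul {X : Ω → ι → ℝ} {Y : Ω' → ι → ℝ}
    (hX : AEMeasurable X μ) (hY : AEMeasurable Y ν) (hU : IsOpen U) (hUne : U.Nonempty)
    (hXint : ∀ α ∈ U, Integrable (fun ω ↦ exp (∑ i, α i * X ω i)) μ)
    (hYint : ∀ α ∈ U, Integrable (fun ω ↦ exp (∑ i, α i * Y ω i)) ν)
    (h : ∀ α ∈ U, ∫ ω, exp (∑ i, α i * X ω i) ∂μ = ∫ ω, exp (∑ i, α i * Y ω i) ∂ν) :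
    IdentDistrib X Y μ ν := by
  classical
  let coord (L : StrongDual ℝ (ι → ℝ)) (i : ι) : ℝ := L (Pi.single i 1)
  have apply_eq (L : StrongDual ℝ (ι → ℝ)) (x : ι → ℝ) : L x = ∑ i, coord L i * x i := by
    conv_lhs => rw [pi_eq_sum_univ' x]
    simp [coord, mul_comm]
  have hcoord : Continuous coord := by fun_prop
  have hcoord_surj : Function.Surjective coord := fun α ↦
    ⟨∑ i, α i • ContinuousLinearMap.proj i, by ext; simp [coord, Pi.single_apply]⟩
  have hmeas {ρ : Measure (ι → ℝ)} (L : StrongDual ℝ (ι → ℝ)) :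
      AEStronglyMeasurable (fun x ↦ exp (L x)) ρ := by fun_prop
  refine ⟨hX, hY, measure_ext_of_integral_exp_dual (hU.preimage hcoord)
    (hUne.preimage hcoord_surj) (fun L hL ↦ ?_) (fun L hL ↦ ?_) fun L hL ↦ ?_⟩
  · rw [integrable_map_measure (hmeas L) hX]
    simpa only [Function.comp_def, apply_eq] using hXint _ hL
  · rw [integrable_map_measure (hmeas L) hY]
    simpa only [Function.comp_def, apply_eq] using hYint _ hL
  · rw [integral_map hX (hmeas L), integral_map hY (hmeas L)]
    simpa only [apply_eq] using h _ hL

lemma exp_sum_mul_log {x : ι → ℝ} (hx : ∀ i, 0 < x i) (α : ι → ℝ) :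
    exp (∑ i, α i * log (x i)) = ∏ i, x i ^ α i := by
  simp only [exp_sum, rpow_def_of_pos (hx _), mul_comm]

theorem stmt2_general {ξ : Ω → ι → ℝ} {η : Ω' → ι → ℝ}
    (hξm : AEMeasurable ξ μ) (hηm : AEMeasurable η ν)
    (hξpos : ∀ᵐ ω ∂μ, ∀ i, 0 < ξ ω i) (hηpos : ∀ᵐ ω ∂ν, ∀ i, 0 < η ω i)
    (hU : IsOpen U) (hUne : U.Nonempty)
    (hξint : ∀ α ∈ U, Integrable (fun ω ↦ ∏ i, ξ ω i ^ α i) μ)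
    (hηint : ∀ α ∈ U, Integrable (fun ω ↦ ∏ i, η ω i ^ α i) ν)
    (heq : ∀ α ∈ U, ∫ ω, ∏ i, ξ ω i ^ α i ∂μ = ∫ ω, ∏ i, η ω i ^ α i ∂ν) :
    IdentDistrib ξ η μ ν := by
  have hξexp (α : ι → ℝ) : (fun ω ↦ exp (∑ i, α i * log (ξ ω i))) =ᵐ[μ] fun ω ↦ ∏ i, ξ ω i ^ α i :=
    hξpos.mono fun _ hω ↦ exp_sum_mul_log hω α
  have hηexp (α : ι → ℝ) : (fun ω ↦ exp (∑ i, α i * log (η ω i))) =ᵐ[ν] fun ω ↦ ∏ i, η ω i ^ α i :=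
    hηpos.mono fun _ hω ↦ exp_sum_mul_log hω α
  have hlog : IdentDistrib (fun ω i ↦ log (ξ ω i)) (fun ω i ↦ log (η ω i)) μ ν := by
    refine identDistrib_of_integral_exp_sum_mul (by fun_prop) (by fun_prop) hU hUne
      (fun α hα ↦ (hξint α hα).congr (hξexp α).symm)
      (fun α hα ↦ (hηint α hα).congr (hηexp α).symm) fun α hα ↦ ?_
    rw [integral_congr_ae (hξexp α), integral_congr_ae (hηexp α), heq α hα]
  have hexp : IdentDistrib (fun ω i ↦ exp (log (ξ ω i))) (fun ω i ↦ exp (log (η ω i))) μ ν :=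
    hlog.comp (u := fun x i ↦ exp (x i)) (by fun_prop)
  exact (identDistrib_exp_log hξm hξpos).symm.trans (hexp.trans (identDistrib_exp_log hηm hηpos))

end RandomVectors

theorem stmt2 {n : ℕ} {Ω : Type*} [MeasurableSpace Ω] (P : Measure Ω)
    [IsProbabilityMeasure P]
    (ξ η : Ω → Fin n → ℝ) (hξm : Measurable ξ) (hηm : Measurable η)
    (hξpos : ∀ ω i, 0 < ξ ω i) (hηpos : ∀ ω i, 0 < η ω i)
    (U : Set (Fin n → ℝ)) (hU : IsOpen U) (hUne : U.Nonempty)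
    (hint : ∀ α ∈ U, Integrable (fun ω => ∏ i, ξ ω i ^ α i) P ∧
      Integrable (fun ω => ∏ i, η ω i ^ α i) P)
    (heq : ∀ α ∈ U,
      ∫ ω, ∏ i, ξ ω i ^ α i ∂P = ∫ ω, ∏ i, η ω i ^ α i ∂P) :
    Measure.map ξ P = Measure.map η P :=
  (stmt2_general hξm.aemeasurable hηm.aemeasurable (.of_forall hξpos) (.of_forall hηpos) hU hUne
    (fun α hα ↦ (hint α hα).1) (fun α hα ↦ (hint α hα).2) heq).map_eq
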